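/- Let G1 be a k1-regular finite simple graph on n1 vertices (not necessarily connected) with k1 even, and let G2 be a finite simple graph (not necessarily connected) whose maximum degree is at most k2 and whose minimum degree is at least 1. If k1²/2 > k2, then the Cartesian product G1 × G2 is antimagic. -/

import Mathlib

/-- The vertex sum at `v` under an edge labeling `f`: the sum of the labels of all
edges incident with `v`. -/
noncomputable def vertexSum {V : Type*} [Finite V] (G : SimpleGraph V)
    (f : Sym2 V → ℕ) (v : V) : ℕ :=
  ∑ e ∈ (G.incidenceSet v).toFinite.toFinset, f e

/-- A graph is antimagic if there is a bijection from its edge set to `{1, ..., m}`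
(`m` = number of edges) such that all vertex sums are pairwise distinct. -/
def IsAntimagic {V : Type*} [Finite V] (G : SimpleGraph V) : Prop :=
  ∃ f : Sym2 V → ℕ,
    Set.BijOn f G.edgeSet (Set.Icc 1 (Nat.card G.edgeSet)) ∧
    ∀ u v : V, u ≠ v → vertexSum G f u ≠ vertexSum G f v

/-!
By Petersen's theorem a `2r`-regular graph `G₁` on `n` vertices is a union of `r` two-factors, given
by permutations `σ i` of the vertices. If the edges `s(v, σ i v)` receive the labels
`x i v + n * i + 1`, where `x i` numbers the vertices, then the vertex sums of `G₁` depend, up to a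
constant, only on the sums `x i v + x i ((σ i).symm v)`. Two factors `σ` and `τ` with opposite
numberings contribute a constant plus `x (σ.symm v) - x (τ.symm v)`, which lies between `-2` and `2`
if each cycle of `τ.symm * σ` is numbered by folding it flat. The contribution of a factor left over
when `r` is odd can be made to vary by at most `n`. Hence the vertex sums of `G₁` spread over a
range of only `n + 4 * (r / 2)`.

In `G₁ □ G₂` the copies of each edge of `G₂` take consecutive labels, in the order of the vertex
sums of `G₁`, and above all of these the copies of `G₁` take consecutive blocks of labels, in the
order of the contributions of `G₂`. The vertex sums then increase inside every copy of `G₁`, and the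
small spread keeps different copies apart.
-/

section

open Finset Equiv

section Enumeration

variable {α β : Type*} [Fintype α] [LinearOrder β]

theorem exists_equiv_fin_of_injective_of_lt (x : α → ℕ) (hx : Function.Injective x)
    (hlt : ∀ a, x a < Fintype.card α) : ∃ e : α ≃ Fin (Fintype.card α), ∀ a, (e a : ℕ) = x a :=
  ⟨Equiv.ofBijective (fun a => ⟨x a, hlt a⟩) <|
    (Fintype.bijective_iff_injective_and_card _).2
      ⟨fun _ _ h => hx (congrArg Fin.val h), (Fintype.card_fin _).symm⟩, fun _ => rfl⟩

theorem exists_equiv_fin_monotone (s : α → β) :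
    ∃ e : α ≃ Fin (Fintype.card α), ∀ a b, e a ≤ e b → s a ≤ s b := by
  let e := Fintype.equivFin α
  refine ⟨e.trans (Tuple.sort (s ∘ e.symm)).symm, fun a b h => ?_⟩
  simpa using Tuple.monotone_sort (s ∘ e.symm) h

theorem exists_equiv_fin_lt_card_le (s : α → β) :
    ∃ e : α ≃ Fin (Fintype.card α), ∀ a, (e a : ℕ) < #{b | s b ≤ s a} := by
  obtain ⟨e, he⟩ := exists_equiv_fin_monotone s
  refine ⟨e, fun a => ?_⟩
  calc (e a : ℕ) < #(Iic (e a)) := by simp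
    _ = #((Iic (e a)).map e.symm.toEmbedding) := (card_map _).symm
    _ ≤ #{b | s b ≤ s a} := card_le_card fun b hb => by
        obtain ⟨i, hi, rfl⟩ := mem_map.1 hb
        simpa using he _ a (by simpa using hi)

theorem exists_equiv_fin_of_fiberwise (q : α → β) (y : α → ℕ)
    (hinj : ∀ a b, q a = q b → y a = y b → a = b) (hlt : ∀ a, y a < #{b | q b = q a}) :
    ∃ e : α ≃ Fin (Fintype.card α), ∀ a, (e a : ℕ) = #{b | q b < q a} + y a := by
  have hcard (a : α) : #{b | q b < q a} + #{b | q b = q a} = #{b | q b ≤ q a} := by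
    classical
    rw [← card_union_of_disjoint (by grind [disjoint_left]), ← filter_or]
    simp only [le_iff_lt_or_eq]
  have hlt_of_lt (a b : α) (h : q a < q b) : #{c | q c < q a} + y a < #{c | q c < q b} :=
    calc #{c | q c < q a} + y a < #{c | q c ≤ q a} := hcard a ▸ Nat.add_lt_add_left (hlt a) _
      _ ≤ #{c | q c < q b} := card_le_card <|
        monotone_filter_right _ fun _ _ hc => lt_of_le_of_lt hc h
  refine exists_equiv_fin_of_injective_of_lt _ (fun a b h => ?_) fun a => ?_
  · rcases lt_trichotomy (q a) (q b) with hab | hab | hab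
    · have := hlt_of_lt a b hab
      grind
    · exact hinj a b hab (by simpa [hab] using h)
    · have := hlt_of_lt b a hab
      grind
  · calc #{b | q b < q a} + y a < #{b | q b ≤ q a} := hcard a ▸ Nat.add_lt_add_left (hlt a) _
      _ ≤ Fintype.card α := card_le_univ _

end Enumeration

section Cycle

/-- The position at which a cycle of length `L` visits its `i`-th point when it is folded flat:
the even positions in increasing order, followed by the odd ones in decreasing order. -/
def cycleFold (L i : ℕ) : ℕ :=
  if 2 * i < L then 2 * i else 2 * (L - 1 - i) + 1

theorem cycleFold_lt {L i : ℕ} (hi : i < L) : cycleFold L i < L := by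
  grind [cycleFold]

theorem cycleFold_inj {L i j : ℕ} (hi : i < L) (hj : j < L) (h : cycleFold L i = cycleFold L j) :
    i = j := by
  grind [cycleFold]

theorem cycleFold_le_add_two {L i j : ℕ} (hi : i < L) (hj : j < L) (hij : j ≡ i + 1 [MOD L]) :
    cycleFold L i ≤ cycleFold L j + 2 ∧ cycleFold L j ≤ cycleFold L i + 2 := by
  have hj' : j = if i + 1 < L then i + 1 else 0 := by
    rw [← Nat.mod_eq_of_lt hj, hij]
    split_ifs with h
    · exact Nat.mod_eq_of_lt h
    · rw [show i + 1 = L by omega, Nat.mod_self]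
  grind [cycleFold]

variable {V : Type*} [Fintype V]

theorem exists_cycle_coordinates (ρ : Perm V) :
    ∃ (q : V → Fin (Fintype.card V)) (i : V → ℕ), (∀ v, q (ρ v) = q v) ∧
      (∀ v, i v < #{w | q w = q v}) ∧ (∀ v w, q v = q w → i v = i w → v = w) ∧
      ∀ v, i (ρ v) ≡ i v + 1 [MOD #{w | q w = q v}] := by
  let root (v : V) : V := (Quotient.mk (Perm.SameCycle.setoid ρ) v).out
  let q (v : V) := Fintype.equivFin V (root v)
  have hroot (v : V) : ρ.SameCycle (root v) v := Quotient.mk_out (s := Perm.SameCycle.setoid ρ) v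
  have hq {v w : V} : q v = q w ↔ ρ.SameCycle v w := by
    refine (Fintype.equivFin V).apply_eq_iff_eq.trans ⟨fun h => ?_, fun h => ?_⟩
    · exact (hroot v).symm.trans (h ▸ hroot w)
    · exact congrArg Quotient.out (Quotient.sound (s := Perm.SameCycle.setoid ρ) h)
  have hq_apply (v : V) : q (ρ v) = q v := hq.2 (Perm.sameCycle_apply_left.2 .rfl)
  have hcycle (v : V) : ρ.IsCycleOn ({w | q w = q v} : Finset V) :=
    ⟨ρ.bijOn fun w => by simp [hq_apply], fun w hw w' hw' => hq.1 <| by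
      simp only [coe_filter, mem_univ, true_and, Set.mem_ofPred_eq] at hw hw'
      rw [hw, hw']⟩
  have hroot_mem (v : V) : root v ∈ ({w | q w = q v} : Finset V) := by simp [hq, hroot]
  choose i hlt hi using fun v => (hcycle v).exists_pow_eq (hroot_mem v) (b := v) (by simp)
  have hroot_eq {v w : V} (h : q v = q w) : root v = root w := (Fintype.equivFin V).injective h
  refine ⟨q, i, hq_apply, hlt, fun v w hvw h => ?_, fun v => ?_⟩
  · rw [← hi v, ← hi w, hroot_eq hvw, h]
  · rw [← (hcycle v).pow_apply_eq_pow_apply (hroot_mem v), pow_succ', Perm.mul_apply, hi,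
      ← hroot_eq (hq_apply v), hi]

theorem exists_equiv_fin_bandwidth_le_two (ρ : Perm V) :
    ∃ x : V ≃ Fin (Fintype.card V), ∀ v, (x v : ℕ) ≤ x (ρ v) + 2 ∧ (x (ρ v) : ℕ) ≤ x v + 2 := by
  obtain ⟨q, i, hq, hlt, hinj, hsucc⟩ := exists_cycle_coordinates ρ
  obtain ⟨x, hx⟩ := exists_equiv_fin_of_fiberwise q (fun v => cycleFold #{w | q w = q v} (i v))
    (fun v w hvw h => hinj v w hvw <| cycleFold_inj (hlt v) (hvw ▸ hlt w) (by simpa [hvw] using h))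
    fun v => cycleFold_lt (hlt v)
  refine ⟨x, fun v => ?_⟩
  have hband := cycleFold_le_add_two (hlt v) (hq v ▸ hlt (ρ v)) (hsucc v)
  rw [hx, hx, hq]
  omega

end Cycle

section Permutation

variable {V : Type*}

theorem exists_maximal_disjoint_image [Finite V] (σ : Perm V) (hσ : ∀ v, σ v ≠ v) :
    ∃ A : Finset V, (∀ v ∈ A, σ v ∉ A) ∧ ∀ v ∉ A, σ.symm v ∉ A → σ v ∈ A := by
  classical
  obtain ⟨A, hA⟩ :=
    (Set.toFinite {A : Finset V | ∀ v ∈ A, σ v ∉ A}).exists_maximal ⟨∅, by simp⟩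
  refine ⟨A, hA.prop, fun v hv hv' => ?_⟩
  by_contra hσv
  refine hv (hA.le_of_ge (y := insert v A) (fun w hw => ?_) (subset_insert v A)
    (mem_insert_self v A))
  rw [mem_insert, not_or]
  rcases mem_insert.1 hw with rfl | hw
  · exact ⟨hσ _, hσv⟩
  · exact ⟨fun h => hv' (by simpa [← h] using hw), hA.prop w hw⟩

theorem exists_lt_card_of_subset [Finite V] {A C : Finset V} (hCA : C ⊆ A) :
    ∃ a : V → ℕ, Function.Injective a ∧ (∀ v ∈ C, a v < #C) ∧ ∀ v ∈ A, a v < #A := by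
  classical
  have := Fintype.ofFinite V
  obtain ⟨a, ha⟩ := exists_equiv_fin_lt_card_le
    fun v => (if v ∈ C then 0 else 1) + (if v ∈ A then 0 else 1)
  refine ⟨fun v => a v, Fin.val_injective.comp a.injective, fun v hv => ?_, fun v hv => ?_⟩
  all_goals
    refine (ha v).trans_le (card_le_card fun w hw => ?_)
    grind

variable [Fintype V] {σ : Perm V} {A B : Finset V}

theorem card_eq_two_mul_card_add_card (hA : ∀ v ∈ A, σ v ∉ A)
    (hB : ∀ v, v ∈ B ↔ v ∉ A ∧ σ.symm v ∉ A) : Fintype.card V = 2 * #A + #B := by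
  classical
  have hcompl : (A ∪ B)ᶜ = A.map σ.toEmbedding := by
    ext v
    simp only [mem_compl, mem_union, hB, mem_map_equiv]
    grind
  rw [← card_add_card_compl (A ∪ B), hcompl, card_map,
    card_union_of_disjoint (by grind [disjoint_left])]
  ring

-- The set `A` receives the smallest numbers and its image under `σ` the largest ones in opposite
-- order, so that `x v + x (σ v)` is constant on `A`; the numbers in between make it constant on `B`
-- if `σ` maps `B` into `A`.
theorem exists_equiv_fin_fold (hA : ∀ v ∈ A, σ v ∉ A) (hB : ∀ v, v ∈ B ↔ v ∉ A ∧ σ.symm v ∉ A)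
    {a : V → ℕ} (ha : Function.Injective a) (haA : ∀ v ∈ A, a v < #A)
    (haB : ∀ v ∈ B, a (σ v) < #B) :
    ∃ x : V ≃ Fin (Fintype.card V),
      (∀ v ∈ A, (x v : ℕ) = a v ∧ (x (σ v) + a v + 1 : ℕ) = Fintype.card V) ∧
      ∀ v ∈ B, (x v + a (σ v) + 1 : ℕ) = #A + #B := by
  classical
  have hcard := card_eq_two_mul_card_add_card hA hB
  let y (v : V) : ℕ := if v ∈ A then a v else if v ∈ B then #A + #B - 1 - a (σ v) else
    Fintype.card V - 1 - a (σ.symm v)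
  have hyA {v : V} (hv : v ∈ A) : y v = a v := if_pos hv
  have hyσ {v : V} (hv : v ∈ A) : y (σ v) + a v + 1 = Fintype.card V := by
    have := haA v hv
    grind
  have hyB {v : V} (hv : v ∈ B) : y v + a (σ v) + 1 = #A + #B := by
    have := haB v hv
    grind
  have hy (v : V) : (y v = a v ∧ a v < #A) ∨ (y v + a (σ v) + 1 = #A + #B ∧ a (σ v) < #B) ∨
      ∃ w, σ w = v ∧ y v + a w + 1 = Fintype.card V ∧ a w < #A := by
    by_cases hvA : v ∈ A
    · exact .inl ⟨hyA hvA, haA v hvA⟩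
    by_cases hv : σ.symm v ∈ A
    · exact .inr (.inr ⟨_, by simp, by simpa using hyσ hv, haA _ hv⟩)
    · exact .inr (.inl ⟨hyB ((hB v).2 ⟨hvA, hv⟩), haB v ((hB v).2 ⟨hvA, hv⟩)⟩)
  obtain ⟨x, hx⟩ := exists_equiv_fin_of_injective_of_lt y
    (fun v w h => by
      rcases hy v with hv | hv | ⟨v, rfl, hv⟩ <;> rcases hy w with hw | hw | ⟨w, rfl, hw⟩ <;>
        try omega
      · exact ha (by omega)
      · exact σ.injective (ha (by omega))
      · exact congrArg σ (ha (by omega)))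
    (fun v => by rcases hy v with hv | hv | ⟨v, rfl, hv⟩ <;> omega)
  exact ⟨x, fun v hv => by simp only [hx]; exact ⟨hyA hv, hyσ hv⟩, fun v hv => hx v ▸ hyB hv⟩

theorem exists_equiv_fin_add_apply_eq (hA : ∀ v ∈ A, σ v ∉ A)
    (hB : ∀ v, v ∈ B ↔ v ∉ A ∧ σ.symm v ∉ A) (hσB : ∀ v ∈ B, σ v ∈ A) :
    ∃ x : V ≃ Fin (Fintype.card V),
      (∀ v ∈ A, (x v : ℕ) < #A ∧ (x v + x (σ v) + 1 : ℕ) = Fintype.card V) ∧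
      ∀ v ∈ B, (x (σ v) : ℕ) < #B ∧ (x v + x (σ v) + 1 : ℕ) = #A + #B := by
  obtain ⟨a, ha, haB, haA⟩ := exists_lt_card_of_subset (A := A) (C := B.map σ.toEmbedding)
    fun v hv => by
      obtain ⟨w, hw, rfl⟩ := mem_map.1 hv
      exact hσB w hw
  rw [card_map] at haB
  replace haB (v : V) (hv : v ∈ B) : a (σ v) < #B := haB _ (mem_map_of_mem _ hv)
  obtain ⟨x, hxA, hxB⟩ := exists_equiv_fin_fold hA hB ha haA haB
  refine ⟨x, fun v hv => ?_, fun v hv => ?_⟩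
  · have := haA v hv
    have := hxA v hv
    omega
  · have := haB v hv
    have := hxA (σ v) (hσB v hv)
    have := hxB v hv
    omega

theorem exists_equiv_fin_add_le_add_card (hσ : ∀ v, σ v ≠ v) :
    ∃ x : V ≃ Fin (Fintype.card V), ∀ u u',
      (x u + x (σ.symm u) : ℕ) ≤ x u' + x (σ.symm u') + Fintype.card V := by
  classical
  obtain ⟨A, hA, hmax⟩ := exists_maximal_disjoint_image σ hσ
  obtain ⟨B, hB⟩ : ∃ B : Finset V, ∀ v, v ∈ B ↔ v ∉ A ∧ σ.symm v ∉ A :=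
    ⟨(A ∪ A.map σ.toEmbedding)ᶜ, fun v => by rw [mem_compl, mem_union, not_or, mem_map_equiv]⟩
  obtain ⟨x, hxA, hxB⟩ := exists_equiv_fin_add_apply_eq hA hB fun v hv =>
    hmax v ((hB v).1 hv).1 ((hB v).1 hv).2
  have hcard := card_eq_two_mul_card_add_card hA hB
  have hwindow (v : V) : #A + #B ≤ (x (σ v) + x v + 1 : ℕ) ∧
      (x (σ v) + x v : ℕ) < #A + #B + Fintype.card V := by
    by_cases hv : v ∈ A
    · have := hxA v hv
      omega
    by_cases hv' : σ.symm v ∈ A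
    · have hpred := hxA _ hv'
      rw [apply_symm_apply] at hpred
      by_cases hσv : σ v ∈ A
      · have := hxA _ hσv
        omega
      · have := hxB (σ v) ((hB _).2 ⟨hσv, by simpa using hv⟩)
        omega
    · have := hxB v ((hB v).2 ⟨hv, hv'⟩)
      omega
  refine ⟨x, fun u u' => ?_⟩
  have := hwindow (σ.symm u)
  have := hwindow (σ.symm u')
  grind

theorem exists_equiv_fin_add_le_add_four (σ τ : Perm V) :
    ∃ x y : V ≃ Fin (Fintype.card V), ∀ u u',
      (x u + x (σ.symm u) + (y u + y (τ.symm u)) : ℕ) ≤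
        x u' + x (σ.symm u') + (y u' + y (τ.symm u')) + 4 := by
  obtain ⟨x, hx⟩ := exists_equiv_fin_bandwidth_le_two (τ.symm * σ)
  -- For opposite numberings `x` and `y` only `x (σ.symm u) - x (τ.symm u)` depends on `u`.
  refine ⟨x, x.trans Fin.revPerm, fun u u' => ?_⟩
  have hu := hx (σ.symm u)
  have hu' := hx (σ.symm u')
  simp only [Perm.mul_apply, apply_symm_apply] at hu hu'
  simp only [trans_apply, Fin.revPerm_apply, Fin.val_rev]
  omega

theorem exists_equiv_fin_sum_add_le {r : ℕ} (σ : Fin r → Perm V) (hσ : ∀ i v, σ i v ≠ v) :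
    ∃ x : Fin r → (V ≃ Fin (Fintype.card V)), ∀ u u',
      ∑ i, (x i u + x i ((σ i).symm u) : ℕ) ≤
        ∑ i, (x i u' + x i ((σ i).symm u') : ℕ) + Fintype.card V + 4 * (r / 2) := by
  induction r using Nat.twoStepInduction with
  | zero => exact ⟨Fin.elim0, by simp⟩
  | one =>
    obtain ⟨x, hx⟩ := exists_equiv_fin_add_le_add_card (hσ 0)
    exact ⟨fun _ => x, by simpa using hx⟩
  | more r ih _ =>
    obtain ⟨z, hz⟩ := ih (fun i => σ i.succ.succ) fun i => hσ i.succ.succ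
    obtain ⟨x, y, hxy⟩ := exists_equiv_fin_add_le_add_four (σ 0) (σ 1)
    refine ⟨Fin.cons x (Fin.cons y z), fun u u' => ?_⟩
    simp only [Fin.sum_univ_succ, Fin.cons_zero, Fin.cons_succ, Fin.succ_zero_eq_one]
    have := hz u u'
    have := hxy u u'
    omega

end Permutation

section Factorization

section Bipartite

variable {E A B : Type*} [DecidableEq A] [DecidableEq B] {S : Finset E} {a : E → A} {b : E → B}

theorem exists_injective_selection {d : ℕ} (hd : 0 < d) (ha : ∀ x, d ≤ #{e ∈ S | a e = x})
    (hb : ∀ y, #{e ∈ S | b e = y} ≤ d) :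
    ∃ M : A → E, (∀ x, M x ∈ S ∧ a (M x) = x) ∧ Function.Injective (b ∘ M) := by
  have hall (T : Finset A) : #T ≤ #(T.biUnion fun x => {e ∈ S | a e = x}.image b) := by
    let U := {e ∈ S | a e ∈ T}
    have hU (x : A) (hx : x ∈ T) : {e ∈ U | a e = x} = {e ∈ S | a e = x} := by grind
    refine Nat.le_of_mul_le_mul_left ?_ hd
    calc d * #T ≤ #U := mul_card_image_le_card_of_maps_to (f := a) (by grind) d
          fun x hx => hU x hx ▸ ha x
      _ ≤ d * #(T.biUnion fun x => {e ∈ S | a e = x}.image b) :=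
        card_le_mul_card_image_of_maps_to (f := b)
          (fun e he => mem_biUnion.2 ⟨a e, by grind, by grind⟩) d
          fun y _ => (card_le_card (filter_subset_filter _ (filter_subset _ _))).trans (hb y)
  obtain ⟨f, hf, hmem⟩ := (all_card_le_biUnion_card_iff_exists_injective _).1 hall
  simp only [mem_image, mem_filter] at hmem
  choose M hM hMf using hmem
  exact ⟨M, hM, (funext hMf : b ∘ M = f) ▸ hf⟩

theorem exists_bijective_selection [Finite A] [Finite B] {d : ℕ} (hd : 0 < d)
    (ha : ∀ x, #{e ∈ S | a e = x} = d) (hb : ∀ y, #{e ∈ S | b e = y} = d) :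
    ∃ M : A → E, (∀ x, M x ∈ S ∧ a (M x) = x) ∧ Function.Bijective (b ∘ M) := by
  obtain ⟨M, hM, hbM⟩ := exists_injective_selection hd (fun x => (ha x).ge) fun y => (hb y).le
  obtain ⟨M', -, haM'⟩ := exists_injective_selection hd (fun y => (hb y).ge) fun x => (ha x).le
  exact ⟨M, hM, hbM.bijective_of_nat_card_le (Nat.card_le_card_of_injective _ haM')⟩

theorem card_filter_notMem_selection [DecidableEq E] {M : A → E}
    (hM : ∀ x, M x ∈ S ∧ a (M x) = x) (hbM : Function.Bijective (b ∘ M)) :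
    (∀ x, #{e ∈ {e ∈ S | M (a e) ≠ e} | a e = x} = #{e ∈ S | a e = x} - 1) ∧
      ∀ y, #{e ∈ {e ∈ S | M (a e) ≠ e} | b e = y} = #{e ∈ S | b e = y} - 1 := by
  refine ⟨fun x => ?_, fun y => ?_⟩
  · rw [← card_erase_of_mem (a := M x) (by grind)]
    congr 1
    grind
  · obtain ⟨x, rfl⟩ := hbM.2 y
    rw [← card_erase_of_mem (a := M x) (by grind)]
    congr 1
    ext e
    have : b (M (a e)) = b (M x) → a e = x := @hbM.1 _ _
    grind

theorem exists_matching_decomposition [Finite A] [Finite B] {r : ℕ}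
    (ha : ∀ x, #{e ∈ S | a e = x} = r) (hb : ∀ y, #{e ∈ S | b e = y} = r) :
    ∃ M : Fin r → A → E, (∀ i x, M i x ∈ S ∧ a (M i x) = x) ∧
      (∀ i, Function.Bijective (b ∘ M i)) ∧ ∀ e ∈ S, ∃! i, M i (a e) = e := by
  classical
  induction r generalizing S with
  | zero =>
    refine ⟨Fin.elim0, by simp, by simp, fun e he => ?_⟩
    exact absurd he (filter_eq_empty_iff.1 (card_eq_zero.1 (ha (a e))) · rfl)
  | succ r ih =>
    obtain ⟨N, hN, hbN⟩ := exists_bijective_selection r.succ_pos ha hb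
    obtain ⟨haS, hbS⟩ := card_filter_notMem_selection hN hbN
    obtain ⟨M, hM, hbM, huniq⟩ := ih (fun x => by rw [haS, ha, Nat.add_sub_cancel])
      fun y => by rw [hbS, hb, Nat.add_sub_cancel]
    have hMN (i : Fin r) (x : A) : M i x ≠ N x := by grind
    refine ⟨Fin.cons N M, ?_, ?_, fun e he => ?_⟩
    · exact Fin.cases hN fun i x => ⟨(mem_filter.1 (hM i x).1).1, (hM i x).2⟩
    · exact Fin.cases hbN hbM
    · by_cases hNe : N (a e) = e
      · exact ⟨0, hNe, Fin.cases (fun _ => rfl) fun i hi => (hMN i _ (hi.trans hNe.symm)).elim⟩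
      · obtain ⟨i, hi, hi'⟩ := huniq e (mem_filter.2 ⟨he, hNe⟩)
        exact ⟨i.succ, hi, Fin.cases (fun h => (hNe h).elim) fun j hj => congrArg _ (hi' j hj)⟩

end Bipartite

variable {V : Type*} [Fintype V] [DecidableEq V] {G : SimpleGraph V} [DecidableRel G.Adj] {r : ℕ}

theorem card_filter_fst_add_card_filter_snd {D : Finset G.Dart}
    (hD : ∀ d : G.Dart, d.symm ∈ D ↔ d ∉ D) (v : V) :
    #{d ∈ D | d.fst = v} + #{d ∈ D | d.snd = v} = G.degree v := by
  have hsnd : #{d ∈ D | d.snd = v} = #{d ∈ Dᶜ | d.fst = v} :=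
    card_bijective _ SimpleGraph.Dart.symm_involutive.bijective fun d => by simp [← hD]
  rw [hsnd, ← G.dart_fst_fiber_card_eq_degree, ← union_compl D, filter_union,
    card_union_of_disjoint (disjoint_filter_filter disjoint_compl_right)]

theorem exists_orientation_card_le (hG : ∀ v, G.degree v ≤ 2 * r) :
    ∃ D : Finset G.Dart, (∀ d : G.Dart, d.symm ∈ D ↔ d ∉ D) ∧ ∀ v, #{d ∈ D | d.fst = v} ≤ r := by
  obtain rfl | hr := r.eq_zero_or_pos
  · have : IsEmpty G.Dart :=
      ⟨fun d => ((G.degree_pos_iff_exists_adj _).2 ⟨_, d.adj⟩).not_ge (hG d.fst)⟩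
    exact ⟨∅, isEmptyElim, by simp⟩
  -- Every edge selects one of its darts together with one of `r` slots at the tail of that dart.
  obtain ⟨M, hM, hinj⟩ := exists_injective_selection (S := (univ : Finset (G.Dart × Fin r)))
    (a := fun p => (⟨p.1.edge, p.1.edge_mem⟩ : G.edgeSet)) (b := fun p => (p.1.fst, p.2))
    (d := 2 * r) (by omega)
    (fun e => by
      have : ({p | ⟨p.1.edge, p.1.edge_mem⟩ = e} : Finset (G.Dart × Fin r)) =
          ({d | d.edge = e} : Finset G.Dart) ×ˢ univ := by
        ext p
        simp [Subtype.ext_iff]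
      rw [this, card_product, G.dart_edge_fiber_card e e.2, card_univ, Fintype.card_fin])
    (fun v => by
      have : ({p | (p.1.fst, p.2) = v} : Finset (G.Dart × Fin r)) =
          ({d | d.fst = v.1} : Finset G.Dart) ×ˢ {v.2} := by
        ext p
        simp [Prod.ext_iff, eq_comm (a := v.2)]
      rw [this, card_product, G.dart_fst_fiber_card_eq_degree, card_singleton, mul_one]
      exact hG v.1)
  let edge (d : G.Dart) : G.edgeSet := ⟨d.edge, d.edge_mem⟩
  have hedge (e : G.edgeSet) : edge (M e).1 = e := (hM e).2
  have hsymm (d : G.Dart) : edge d.symm = edge d := Subtype.ext d.edge_symm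
  refine ⟨({d | (M (edge d)).1 = d} : Finset G.Dart), fun d => ?_, fun v => ?_⟩
  · have : (M (edge d)).1 = d ∨ (M (edge d)).1 = d.symm :=
      (SimpleGraph.dart_edge_eq_iff _ _).1 (congrArg Subtype.val (hedge (edge d)))
    have := d.symm_ne
    simp only [mem_filter_univ, hsymm]
    grind
  · refine (card_le_card_of_injOn (t := univ) (fun d => (M (edge d)).2) (by simp) ?_).trans_eq
      (card_fin r)
    intro d hd d' hd' h
    simp only [coe_filter, Set.mem_ofPred_eq, mem_filter_univ] at hd hd'
    have : edge d = edge d' := hinj (Prod.ext (by simp [hd, hd']) h)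
    rw [← hd.1, ← hd'.1, this]

theorem exists_balanced_orientation (hG : G.IsRegularOfDegree (2 * r)) :
    ∃ D : Finset G.Dart, (∀ d : G.Dart, d.symm ∈ D ↔ d ∉ D) ∧
      (∀ v, #{d ∈ D | d.fst = v} = r) ∧ ∀ v, #{d ∈ D | d.snd = v} = r := by
  obtain ⟨D, hD, htail⟩ := exists_orientation_card_le fun v => (hG v).le
  have hadd (v : V) := (card_filter_fst_add_card_filter_snd hD v).trans (hG v)
  have hsum : ∑ v, #{d ∈ D | d.fst = v} = ∑ v, #{d ∈ D | d.snd = v} := by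
    rw [← card_eq_sum_card_fiberwise (by simp), ← card_eq_sum_card_fiberwise (by simp)]
  have heq := (sum_eq_sum_iff_of_le fun v _ => by have := hadd v; have := htail v; omega).1 hsum
  refine ⟨D, hD, fun v => ?_, fun v => ?_⟩
  all_goals
    have := hadd v
    have := heq v (mem_univ v)
    omega

end Factorization

section TwoFactorization

variable {V : Type*} {G : SimpleGraph V} {r : ℕ}

/-- A decomposition of the edges of `G` into `r` two-factors, the `i`-th of them consisting of the
edges `s(v, σ i v)`: every edge is of this form for exactly one pair `(i, v)`. -/
def IsTwoFactorization (G : SimpleGraph V) (σ : Fin r → Perm V) : Prop :=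
  Set.BijOn (fun p : Fin r × V => s(p.2, σ p.1 p.2)) Set.univ G.edgeSet

/-- Petersen's two-factor theorem. -/
theorem exists_isTwoFactorization [Fintype V] [DecidableRel G.Adj]
    (hG : G.IsRegularOfDegree (2 * r)) : ∃ σ : Fin r → Perm V, IsTwoFactorization G σ := by
  classical
  obtain ⟨D, hD, htail, hhead⟩ := exists_balanced_orientation hG
  obtain ⟨M, hM, hbij, huniq⟩ := exists_matching_decomposition htail hhead
  have hedge (i : Fin r) (v : V) : s(v, (M i v).snd) = (M i v).edge :=
    congrArg (fun w => s(w, (M i v).snd)) (hM i v).2.symm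
  refine ⟨fun i => .ofBijective _ (hbij i), ?_, ?_, ?_⟩
  · rintro ⟨i, v⟩ -
    exact (hedge i v).symm.subst (M i v).edge_mem
  · rintro ⟨i, v⟩ - ⟨j, w⟩ - h
    replace h : (M i v).edge = (M j w).edge := hedge i v ▸ hedge j w ▸ h
    have hMij : M i v = M j w := by
      refine ((SimpleGraph.dart_edge_eq_iff _ _).1 h).resolve_right fun h => ?_
      exact (hD (M j w)).1 (h ▸ (hM i v).1) (hM j w).1
    obtain rfl : v = w := by rw [← (hM i v).2, hMij, (hM j w).2]
    obtain ⟨k, -, hk⟩ := huniq _ (hM i v).1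
    rw [(hM i v).2] at hk
    rw [hk i rfl, hk j hMij.symm]
  · intro e he
    obtain ⟨d, hd, rfl⟩ : ∃ d ∈ D, d.edge = e := by
      induction e with | h u v
      let d : G.Dart := ⟨(u, v), he⟩
      by_cases hd : d ∈ D
      · exact ⟨d, hd, rfl⟩
      · exact ⟨d.symm, (hD d).2 hd, d.edge_symm⟩
    obtain ⟨i, hi, -⟩ := huniq d hd
    exact ⟨(i, d.fst), trivial, (hedge i d.fst).trans (congrArg _ hi)⟩

namespace IsTwoFactorization

variable {σ : Fin r → Perm V}

theorem adj_apply (hσ : IsTwoFactorization G σ) (i : Fin r) (v : V) : G.Adj v (σ i v) :=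
  hσ.mapsTo (Set.mem_univ (i, v))

/-- The numbering of the edges of `G` by pairs `(i, v)` that a two-factorization provides. -/
noncomputable def edgeEquiv (hσ : IsTwoFactorization G σ) : Fin r × V ≃ G.edgeSet :=
  .ofBijective (fun p => ⟨s(p.2, σ p.1 p.2), hσ.mapsTo (Set.mem_univ p)⟩)
    ⟨fun _ _ h => hσ.injOn (Set.mem_univ _) (Set.mem_univ _) (congrArg Subtype.val h),
      fun e => (hσ.surjOn e.2).imp fun _ h => Subtype.ext h.2⟩

theorem vertexSum_eq [Finite V] (hσ : IsTwoFactorization G σ) (f : Sym2 V → ℕ) (u : V) :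
    vertexSum G f u = ∑ i, (f s(u, σ i u) + f s((σ i).symm u, u)) := by
  classical
  have hpair (i : Fin r) : u ≠ (σ i).symm u := fun h =>
    (hσ.adj_apply i u).ne (((σ i).eq_symm_apply).1 h).symm
  calc vertexSum G f u
      = ∑ p ∈ univ.sigma fun i : Fin r => {u, (σ i).symm u}, f s(p.2, σ p.1 p.2) := by
        refine (sum_bij (fun p _ => s(p.2, σ p.1 p.2)) ?_ ?_ ?_ fun _ _ => rfl).symm
        · rintro ⟨i, v⟩ hv
          have hu : u = v ∨ u = σ i v := by
            simpa [eq_symm_apply, eq_comm] using hv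
          simpa [SimpleGraph.incidenceSet, hσ.adj_apply i v] using hu
        · rintro ⟨i, v⟩ - ⟨j, w⟩ - h
          have := hσ.injOn (Set.mem_univ (i, v)) (Set.mem_univ (j, w)) h
          simp_all
        · intro e he
          obtain ⟨heG, hue⟩ : e ∈ G.edgeSet ∧ u ∈ e := by
            simpa [SimpleGraph.incidenceSet] using he
          obtain ⟨⟨i, v⟩, -, rfl⟩ := hσ.surjOn heG
          refine ⟨⟨i, v⟩, ?_, rfl⟩
          simpa [eq_symm_apply, eq_comm] using hue
    _ = ∑ i, (f s(u, σ i u) + f s((σ i).symm u, u)) := by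
        simp [sum_sigma, sum_pair (hpair _)]

end IsTwoFactorization

end TwoFactorization

section EdgeLabel

variable {V : Type*} {G : SimpleGraph V}

/-- The edge labeling that gives label `g e + 1` to each edge `e` of `G`, and label `0` to every
pair that is not an edge. A numbering `G.edgeSet ≃ Fin m` thus becomes a labeling by `1, …, m`. -/
noncomputable def edgeLabel (g : G.edgeSet → ℕ) : Sym2 V → ℕ :=
  Function.extend Subtype.val (fun e => g e + 1) 0

theorem edgeLabel_coe (g : G.edgeSet → ℕ) (e : G.edgeSet) : edgeLabel g e = g e + 1 :=
  Subtype.val_injective.extend_apply _ _ _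

theorem isAntimagic_of_equiv [Finite V] {m : ℕ} (e : G.edgeSet ≃ Fin m)
    (he : Function.Injective (vertexSum G (edgeLabel fun x => e x))) : IsAntimagic G := by
  have hlabel (x : G.edgeSet) := edgeLabel_coe (fun x => (e x : ℕ)) x
  refine ⟨edgeLabel fun x => e x, ⟨fun x hx => ?_, fun x hx y hy h => ?_, fun k hk => ?_⟩,
    fun u v huv => he.ne huv⟩
  · rw [Nat.card_congr e, Nat.card_fin, hlabel ⟨x, hx⟩]
    exact ⟨Nat.le_add_left _ _, (e ⟨x, hx⟩).is_lt⟩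
  · rw [hlabel ⟨x, hx⟩, hlabel ⟨y, hy⟩] at h
    exact congrArg Subtype.val (e.injective (Fin.ext (Nat.succ_injective h)))
  · rw [Nat.card_congr e, Nat.card_fin, Set.mem_Icc] at hk
    exact ⟨e.symm ⟨k - 1, by omega⟩, Subtype.coe_prop _, by
      rw [hlabel, apply_symm_apply, Nat.sub_add_cancel hk.1]⟩

theorem vertexSum_eq_sum_neighborFinset [Finite V] (f : Sym2 V → ℕ) (v : V)
    [Fintype (G.neighborSet v)] : vertexSum G f v = ∑ w ∈ G.neighborFinset v, f s(v, w) := by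
  classical
  calc vertexSum G f v = ∑ e ∈ (G.neighborFinset v).image (s(v, ·)), f e := by
        refine sum_congr (Finset.ext fun e => ?_) fun _ _ => rfl
        induction e with | h x y
        simp only [Set.toFinite_toFinset, Set.mem_toFinset, SimpleGraph.mk'_mem_incidenceSet_iff,
          mem_image, SimpleGraph.mem_neighborFinset]
        grind [G.adj_comm x y]
    _ = ∑ w ∈ G.neighborFinset v, f s(v, w) := sum_image (by simp)

theorem vertexSum_congr [Finite V] {f g : Sym2 V → ℕ} (h : ∀ e : G.edgeSet, f e = g e) (v : V) :
    vertexSum G f v = vertexSum G g v :=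
  sum_congr rfl fun e he => h ⟨e, ((Set.Finite.mem_toFinset _).1 he).1⟩

theorem vertexSum_const_add [Finite V] (c : ℕ) (f : Sym2 V → ℕ) (v : V)
    [Fintype (G.neighborSet v)] :
    vertexSum G (fun e => c + f e) v = G.degree v * c + vertexSum G f v := by
  simp [vertexSum_eq_sum_neighborFinset, sum_add_distrib]

end EdgeLabel

theorem exists_equiv_fin_vertexSum_le {V : Type*} [Fintype V] {G : SimpleGraph V}
    [DecidableRel G.Adj] {r : ℕ} (hG : G.IsRegularOfDegree (2 * r)) :
    ∃ e : G.edgeSet ≃ Fin (r * Fintype.card V), ∀ u u',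
      vertexSum G (edgeLabel fun x => e x) u ≤
        vertexSum G (edgeLabel fun x => e x) u' + Fintype.card V + 4 * (r / 2) := by
  classical
  obtain ⟨σ, hσ⟩ := exists_isTwoFactorization hG
  obtain ⟨x, hx⟩ := exists_equiv_fin_sum_add_le σ fun i v => (hσ.adj_apply i v).ne'
  let e : G.edgeSet ≃ Fin (r * Fintype.card V) :=
    hσ.edgeEquiv.symm.trans ((prodCongrRight x).trans finProdFinEquiv)
  have hlabel (i : Fin r) (v : V) :
      edgeLabel (fun x => e x) s(v, σ i v) = x i v + Fintype.card V * i + 1 := by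
    refine (edgeLabel_coe _ (hσ.edgeEquiv (i, v))).trans ?_
    simp [e]
  have hsum (u : V) : vertexSum G (edgeLabel fun x => e x) u =
      ∑ i, (x i u + x i ((σ i).symm u) : ℕ) + ∑ i : Fin r, 2 * (Fintype.card V * i + 1) := by
    have hlabel' (i : Fin r) := hlabel i ((σ i).symm u)
    simp only [apply_symm_apply] at hlabel'
    simp only [hσ.vertexSum_eq, hlabel, hlabel', ← sum_add_distrib]
    exact sum_congr rfl fun i _ => by ring
  refine ⟨e, fun u u' => ?_⟩
  rw [hsum, hsum]
  have := hx u u'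
  omega

section BoxProd

variable {V₁ V₂ : Type*} {G₁ : SimpleGraph V₁} {G₂ : SimpleGraph V₂}

theorem vertexSum_boxProd [Finite V₁] [Finite V₂] (f : Sym2 (V₁ × V₂) → ℕ) (u : V₁) (v : V₂) :
    vertexSum (G₁ □ G₂) f (u, v) =
      vertexSum G₁ (fun e => f (e.map (·, v))) u + vertexSum G₂ (fun e => f (e.map (u, ·))) v := by
  classical
  have := Fintype.ofFinite V₁
  have := Fintype.ofFinite V₂
  simp_rw [vertexSum_eq_sum_neighborFinset, SimpleGraph.neighborFinset_boxProd]
  rw [sum_disjUnion, sum_product, sum_product]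
  simp

/-- Every edge of `G₁ □ G₂` lies in the copy of `G₁` at a unique `v : V₂` or in the copy of `G₂`
at a unique `u : V₁`. -/
noncomputable def boxProdEdgeEquiv (G₁ : SimpleGraph V₁) (G₂ : SimpleGraph V₂) :
    (V₁ × G₂.edgeSet) ⊕ (G₁.edgeSet × V₂) ≃ (G₁ □ G₂).edgeSet :=
  .ofBijective
    (Sum.elim (fun p => (G₁.boxProdRight G₂ p.1).mapEdgeSet p.2)
      (fun p => (G₁.boxProdLeft G₂ p.2).mapEdgeSet p.1)) <| by
    refine ⟨.sumElim ?_ ?_ ?_, ?_⟩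
    · rintro ⟨u, ⟨e, he⟩⟩ ⟨u', ⟨e', he'⟩⟩ h
      induction e, e' using Sym2.inductionOn₂ with | _ a b c d
      replace h : s((u, a), (u, b)) = s((u', c), (u', d)) := congrArg Subtype.val h
      grind
    · rintro ⟨⟨e, he⟩, v⟩ ⟨⟨e', he'⟩, v'⟩ h
      induction e, e' using Sym2.inductionOn₂ with | _ a b c d
      replace h : s((a, v), (b, v)) = s((c, v'), (d, v')) := congrArg Subtype.val h
      grind
    · rintro ⟨u, ⟨e, he⟩⟩ ⟨⟨e', he'⟩, v⟩ h
      induction e, e' using Sym2.inductionOn₂ with | _ a b c d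
      replace h : s((u, a), (u, b)) = s((c, v), (d, v)) := congrArg Subtype.val h
      have : a ≠ b := SimpleGraph.Adj.ne he
      grind
    · rintro ⟨e, he⟩
      induction e with | h p q
      obtain ⟨u, v⟩ := p
      obtain ⟨u', v'⟩ := q
      obtain ⟨h, (rfl : v = v')⟩ | ⟨h, (rfl : u = u')⟩ := SimpleGraph.boxProd_adj.1 he
      · exact ⟨.inr (⟨s(u, u'), h⟩, v), rfl⟩
      · exact ⟨.inl (u, ⟨s(v, v'), h⟩), rfl⟩

theorem coe_boxProdEdgeEquiv_inl (u : V₁) (e : G₂.edgeSet) :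
    (boxProdEdgeEquiv G₁ G₂ (.inl (u, e)) : Sym2 (V₁ × V₂)) = e.1.map (u, ·) :=
  rfl

theorem coe_boxProdEdgeEquiv_inr (e : G₁.edgeSet) (v : V₂) :
    (boxProdEdgeEquiv G₁ G₂ (.inr (e, v)) : Sym2 (V₁ × V₂)) = e.1.map (·, v) :=
  rfl

variable {n₁ n₂ m₁ m₂ : ℕ}

/-- The copies of each edge of `G₂` receive consecutive numbers, ordered by `rank`; above them, each
copy of `G₁` receives a block of consecutive numbers, the blocks being ordered by `pos`. -/
noncomputable def boxProdNumbering (rank : V₁ ≃ Fin n₁) (pos : V₂ ≃ Fin n₂)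
    (e₁ : G₁.edgeSet ≃ Fin m₁) (e₂ : G₂.edgeSet ≃ Fin m₂) :
    (G₁ □ G₂).edgeSet ≃ Fin (m₂ * n₁ + n₂ * m₁) :=
  (boxProdEdgeEquiv G₁ G₂).symm.trans <|
    (sumCongr (((prodComm _ _).trans (prodCongr e₂ rank)).trans finProdFinEquiv)
      (((prodComm _ _).trans (prodCongr pos e₁)).trans finProdFinEquiv)).trans finSumFinEquiv

theorem edgeLabel_boxProdNumbering_left (rank : V₁ ≃ Fin n₁) (pos : V₂ ≃ Fin n₂)
    (e₁ : G₁.edgeSet ≃ Fin m₁) (e₂ : G₂.edgeSet ≃ Fin m₂) (e : G₁.edgeSet) (v : V₂) :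
    edgeLabel (fun x => boxProdNumbering rank pos e₁ e₂ x) (e.1.map (·, v)) =
      m₂ * n₁ + m₁ * pos v + edgeLabel (fun x => e₁ x) e := by
  rw [← coe_boxProdEdgeEquiv_inr, edgeLabel_coe, edgeLabel_coe]
  simp [boxProdNumbering, add_assoc, add_left_comm]

theorem edgeLabel_boxProdNumbering_right (rank : V₁ ≃ Fin n₁) (pos : V₂ ≃ Fin n₂)
    (e₁ : G₁.edgeSet ≃ Fin m₁) (e₂ : G₂.edgeSet ≃ Fin m₂) (u : V₁) (e : G₂.edgeSet) :
    edgeLabel (fun x => boxProdNumbering rank pos e₁ e₂ x) (e.1.map (u, ·)) =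
      rank u + edgeLabel (fun x => n₁ * e₂ x) e := by
  rw [← coe_boxProdEdgeEquiv_inl, edgeLabel_coe, edgeLabel_coe]
  simp [boxProdNumbering, add_assoc]

theorem vertexSum_boxProdNumbering [Fintype V₁] [Fintype V₂] [DecidableRel G₁.Adj]
    [DecidableRel G₂.Adj] (rank : V₁ ≃ Fin n₁) (pos : V₂ ≃ Fin n₂)
    (e₁ : G₁.edgeSet ≃ Fin m₁) (e₂ : G₂.edgeSet ≃ Fin m₂) (u : V₁) (v : V₂) :
    vertexSum (G₁ □ G₂) (edgeLabel fun x => boxProdNumbering rank pos e₁ e₂ x) (u, v) =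
      G₁.degree u * (m₂ * n₁ + m₁ * pos v) + vertexSum G₁ (edgeLabel fun x => e₁ x) u +
        (G₂.degree v * rank u + vertexSum G₂ (edgeLabel fun x => n₁ * e₂ x) v) := by
  rw [vertexSum_boxProd, ← vertexSum_const_add, ← vertexSum_const_add]
  exact congrArg₂ _ (vertexSum_congr (edgeLabel_boxProdNumbering_left rank pos e₁ e₂ · v) u)
    (vertexSum_congr (edgeLabel_boxProdNumbering_right rank pos e₁ e₂ u) v)

theorem isAntimagic_boxProd_of_vertexSum_lt [Fintype V₁] [Fintype V₂] [DecidableRel G₁.Adj]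
    [DecidableRel G₂.Adj] {d m : ℕ} (hd : G₁.IsRegularOfDegree d) (hG₂ : ∀ v, 1 ≤ G₂.degree v)
    (e : G₁.edgeSet ≃ Fin m)
    (hgap : ∀ u u' v, vertexSum G₁ (edgeLabel fun x => e x) u +
      G₂.degree v * (Fintype.card V₁ - 1) < vertexSum G₁ (edgeLabel fun x => e x) u' + d * m) :
    IsAntimagic (G₁ □ G₂) := by
  classical
  set s := vertexSum G₁ (edgeLabel fun x => e x)
  let e₂ := Fintype.equivFin G₂.edgeSet
  let t := vertexSum G₂ (edgeLabel fun x => Fintype.card V₁ * e₂ x)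
  obtain ⟨rank, hrank⟩ := exists_equiv_fin_monotone s
  obtain ⟨pos, hpos⟩ := exists_equiv_fin_monotone t
  let S := vertexSum (G₁ □ G₂) (edgeLabel fun x => boxProdNumbering rank pos e e₂ x)
  have hS (u : V₁) (v : V₂) : S (u, v) =
      d * (Fintype.card G₂.edgeSet * Fintype.card V₁ + m * pos v) + s u +
        (G₂.degree v * rank u + t v) := by
    rw [← hd u]
    exact vertexSum_boxProdNumbering ..
  have hlt_of_pos {u u' : V₁} {v v' : V₂} (h : pos v < pos v') : S (u, v) < S (u', v') := by
    have ht := hpos _ _ h.le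
    have hr : G₂.degree v * rank u ≤ G₂.degree v * (Fintype.card V₁ - 1) := by
      gcongr
      omega
    have hm : d * (m * pos v) + d * m ≤ d * (m * pos v') := by
      rw [← mul_add, ← mul_add_one]
      gcongr
      omega
    have := hgap u u' v
    rw [hS, hS, mul_add, mul_add]
    omega
  have hlt_of_rank {u u' : V₁} {v : V₂} (h : rank u < rank u') : S (u, v) < S (u', v) := by
    have hs := hrank _ _ h.le
    have hr : G₂.degree v * rank u < G₂.degree v * rank u' :=
      Nat.mul_lt_mul_of_pos_left h (hG₂ v)
    rw [hS, hS]
    omega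
  refine isAntimagic_of_equiv (boxProdNumbering rank pos e e₂) ?_
  rintro ⟨u, v⟩ ⟨u', v'⟩ (h : S (u, v) = S (u', v'))
  obtain rfl : v = v' := pos.injective <|
    le_antisymm (not_lt.1 fun hlt => (hlt_of_pos hlt).ne' h)
      (not_lt.1 fun hlt => (hlt_of_pos hlt).ne h)
  obtain rfl : u = u' := rank.injective <|
    le_antisymm (not_lt.1 fun hlt => (hlt_of_rank hlt).ne' h)
      (not_lt.1 fun hlt => (hlt_of_rank hlt).ne h)
  rfl

theorem mul_sub_one_add_lt {r n D : ℕ} (hn : 0 < n) (hD : D < 2 * r ^ 2) :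
    D * (n - 1) + n + 4 * (r / 2) < 2 * r * (r * n) := by
  obtain ⟨n, rfl⟩ := Nat.exists_eq_add_one.2 hn
  obtain ⟨k, hk⟩ := Nat.exists_eq_add_one.2 hD.pos
  have hsmall : 4 * (r / 2) < k := by
    obtain rfl | rfl | hr : r = 0 ∨ r = 1 ∨ 2 ≤ r := by omega
    · omega
    · omega
    · have : 2 * r ≤ r ^ 2 := by nlinarith
      omega
  calc D * (n + 1 - 1) + (n + 1) + 4 * (r / 2) < k * n + (n + 1) + k := by
        have : D * n ≤ k * n := by
          gcongr
          omega
        rw [Nat.add_sub_cancel]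
        omega
    _ = 2 * r ^ 2 * (n + 1) := by rw [hk]; ring
    _ = 2 * r * (r * (n + 1)) := by ring

theorem isAntimagic_boxProd_of_degree_lt [Fintype V₁] [Fintype V₂] [DecidableRel G₁.Adj]
    [DecidableRel G₂.Adj] {r : ℕ} (hG₁ : G₁.IsRegularOfDegree (2 * r))
    (hmin : ∀ v, 1 ≤ G₂.degree v) (hmax : ∀ v, G₂.degree v < 2 * r ^ 2) :
    IsAntimagic (G₁ □ G₂) := by
  obtain ⟨e, he⟩ := exists_equiv_fin_vertexSum_le hG₁
  refine isAntimagic_boxProd_of_vertexSum_lt hG₁ hmin e fun u u' v => ?_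
  have hspread := he u u'
  have hgap := mul_sub_one_add_lt (Fintype.card_pos_iff.2 ⟨u⟩) (hmax v)
  omega

end BoxProd

end

/-- If `G₁` is a `k₁`-regular graph with `k₁` even (not necessarily connected), `G₂` has
maximum degree at most `k₂` and minimum degree at least `1`, and `k₁²/2 > k₂`, then the
Cartesian product `G₁ □ G₂` is antimagic. -/
theorem boxProd_antimagic_even {V₁ V₂ : Type} [Finite V₁] [Finite V₂]
    {n₁ k₁ k₂ : ℕ} (G₁ : SimpleGraph V₁) (G₂ : SimpleGraph V₂)
    (hn₁ : Nat.card V₁ = n₁)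
    (hreg : ∀ v : V₁, Nat.card (G₁.neighborSet v) = k₁)
    (heven : Even k₁)
    (hmax : ∀ v : V₂, Nat.card (G₂.neighborSet v) ≤ k₂)
    (hmin : ∀ v : V₂, 1 ≤ Nat.card (G₂.neighborSet v))
    (hineq : k₂ < k₁ ^ 2 / 2) :
    IsAntimagic (G₁ □ G₂) := by
  classical
  have := Fintype.ofFinite V₁
  have := Fintype.ofFinite V₂
  have hcard {V : Type} [Fintype V] (G : SimpleGraph V) (v : V) :
      Nat.card (G.neighborSet v) = G.degree v := by
    rw [Nat.card_eq_fintype_card, SimpleGraph.card_neighborSet_eq_degree]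
  simp only [hcard] at hreg hmax hmin
  obtain ⟨r, rfl⟩ := heven.exists_two_nsmul
  rw [smul_eq_mul] at hreg hineq
  have hk₂ : k₂ < 2 * r ^ 2 := by
    rwa [show (2 * r) ^ 2 = 2 * (2 * r ^ 2) by ring, Nat.mul_div_cancel_left _ two_pos] at hineq
  exact isAntimagic_boxProd_of_degree_lt hreg hmin fun v => (hmax v).trans_lt hk₂
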